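/- Density of the Dirichlet–Dirichlet domain: under (H0), the set { I^ψ_+ g − (I^ψ_+ g(1)/k₀⁺(1)) · k₀⁺ : g ∈ L¹[−1,1] } is dense in L¹[−1,1]. (This set is the domain of the left Lévy derivative ∂^ψ_+ with killing boundary conditions at both endpoints of [−1,1].) -/

import Mathlib

open MeasureTheory Set Filter Topology

noncomputable section

/-- The tail `φ((y, ∞))` of the Lévy measure `φ`. -/
def levyTail (φ : Measure ℝ) (y : ℝ) : ℝ := (φ (Ioi y)).toReal

/-- The function `Φ(x) = ∫_x^∞ φ((y,∞)) dy` for `x > 0`, and `0` for `x ≤ 0`. -/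
def PhiFn (φ : Measure ℝ) (x : ℝ) : ℝ :=
  if 0 < x then ∫ y in Ioi x, levyTail φ y else 0

/-- The Laplace exponent `ψ(ξ) = ξ² ∫_0^∞ e^{-ξ x} Φ(x) dx`. -/
def psiFn (φ : Measure ℝ) (ξ : ℂ) : ℂ :=
  ξ ^ 2 * ∫ x in Ioi (0 : ℝ), Complex.exp (-ξ * (x : ℂ)) * (PhiFn φ x : ℂ)

/-- Assumption (H0): `φ` is a nonnegative Borel measure on `(0,∞)` with
`∫ (z² ∧ z) φ(dz) < ∞` and `∫_{(0,1)} z φ(dz) = ∞`. -/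
def H0 (φ : Measure ℝ) : Prop :=
  φ (Iic 0) = 0 ∧
  (∫⁻ z in Ioi (0 : ℝ), ENNReal.ofReal (min (z ^ 2) z) ∂φ) < ⊤ ∧
  (∫⁻ z in Ioo (0 : ℝ) 1, ENNReal.ofReal z ∂φ) = ⊤

/-- The defining properties of the scale kernel `k₋₁⁺` (extension by zero to `(-∞,-1)`
of the scale function `k₋₁` of Lemma 3.1): nonnegative on `[-1,∞)`, continuous on
`(-1,∞)`, locally integrable, of sub-exponential growth, with Laplace transform
`∫_0^∞ e^{-ξ y} k₋₁(y-1) dy = ξ/ψ(ξ)` on `{Re ξ > 0}`. -/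
def IsScaleKernel (φ : Measure ℝ) (k : ℝ → ℝ) : Prop :=
  (∀ x : ℝ, x < -1 → k x = 0) ∧
  (∀ x : ℝ, -1 ≤ x → 0 ≤ k x) ∧
  ContinuousOn k (Ioi (-1)) ∧
  LocallyIntegrableOn k (Ici (-1)) ∧
  (∀ ε : ℝ, 0 < ε → Tendsto (fun x : ℝ => Real.exp (-ε * x) * k x) atTop (nhds 0)) ∧
  ∀ ξ : ℂ, 0 < ξ.re →
    IntegrableOn (fun y : ℝ => Complex.exp (-ξ * (y : ℂ)) * (k (y - 1) : ℂ)) (Ioi 0) ∧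
    (∫ y in Ioi (0 : ℝ), Complex.exp (-ξ * (y : ℂ)) * (k (y - 1) : ℂ)) = ξ / psiFn φ ξ

/-- Iterated antiderivatives: `kIter k 0 = k₋₁⁺` and `kIter k (n+1) = I₊ (kIter k n)`,
so that `kₙ⁺ = kIter k (n+1)` for `n ≥ -1`. -/
def kIter (k : ℝ → ℝ) : ℕ → ℝ → ℝ
  | 0 => k
  | m + 1 => fun x => ∫ y in Iic x, kIter k m y

/-- The Lévy integral operator `I^ψ_+ f (x) = ∫_{-1}^x k₀⁺(x-y-1) f(y) dy`. -/
def Iop (k0 f : ℝ → ℝ) (x : ℝ) : ℝ := ∫ y in (-1 : ℝ)..x, k0 (x - y - 1) * f y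

/-- Iterates `(I^ψ_+)ⁿ f`. -/
def IopIter (k0 f : ℝ → ℝ) : ℕ → ℝ → ℝ
  | 0 => f
  | n + 1 => Iop k0 (IopIter k0 f n)

/-- The Mittag-Leffler type operator `E^{ψ,β}_+ f = Σ_{n≥0} βⁿ (I^ψ_+)ⁿ f`. -/
def MLop (k0 : ℝ → ℝ) (β : ℝ) (f : ℝ → ℝ) (x : ℝ) : ℝ :=
  ∑' n : ℕ, β ^ n * IopIter k0 f n x

/-!
The measures `M(dx) = k₋₁(x - 1) dx` and `N(dx) = Φ(x) dx` on `(0, ∞)` have Laplace transforms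
`ξ / ψ(ξ)` and `ψ(ξ) / ξ²`, with product `1 / ξ`; by uniqueness of the Laplace transform they form
a Sonine pair, that is, `M ∗ N` is Lebesgue measure `λ` on `(0, ∞)`. As `k₀⁺` is the shifted
distribution function of `M`, the operator `I^ψ_+` is convolution with `λ ∗ M`. Hence for `h` smooth
with compact support in `(-1, 1)` the function `g = N ∗ h''` satisfies
`I^ψ_+ g = λ ∗ (M ∗ N) ∗ h'' = λ ∗ λ ∗ h'' = h`. The correction by `k₀⁺` then vanishes since
`h(1) = 0`, so the set contains all such `h`, and these are dense in `L¹`.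
-/

open ProbabilityTheory
open scoped ContDiff Manifold

/-! ### Density of smooth functions supported in an open set -/

section SmoothDensity

variable {E F : Type*} [NormedAddCommGroup E] [NormedSpace ℝ E] [FiniteDimensional ℝ E]
  [NormedAddCommGroup F]

theorem exists_contDiff_tsupport_subset_eqOn_one {K U : Set E} (hK : IsCompact K) (hU : IsOpen U)
    (hKU : K ⊆ U) : ∃ χ : E → ℝ, ContDiff ℝ ∞ χ ∧ tsupport χ ⊆ U ∧ EqOn χ 1 K ∧
      ∀ x, χ x ∈ Icc 0 1 := by
  obtain ⟨L, hL, hKL, hLU⟩ := exists_compact_between hK hU hKU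
  obtain ⟨χ, hχK, hχL, hχ⟩ := exists_contMDiffMap_one_nhds_of_subset_interior (n := ⊤) 𝓘(ℝ, E)
    hK.isClosed hKL
  refine ⟨χ, χ.contMDiff.contDiff, ?_, fun x hx => hχK.self_of_nhdsSet x hx, hχ⟩
  exact (closure_minimal (fun x hx => not_imp_comm.1 (hχL x) hx) hL.isClosed).trans hLU

variable [MeasurableSpace E] [BorelSpace E] {μ : Measure E} [IsFiniteMeasureOnCompacts μ]
  {p : ENNReal}

theorem exists_isCompact_eLpNorm_indicator_compl_le (hp₁ : 1 ≤ p) (hp : p ≠ ⊤) {U : Set E}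
    (hU : IsOpen U) {g : E → F} (hg : MemLp g p (μ.restrict U)) (hgc : HasCompactSupport g)
    {ε : ℝ} (hε : 0 < ε) : ∃ K ⊆ U, IsCompact K ∧
      eLpNorm (Kᶜ.indicator g) p (μ.restrict U) ≤ ENNReal.ofReal ε := by
  obtain ⟨δ, hδ, hsmall⟩ := hg.eLpNorm_indicator_le hp₁ hp hε
  obtain ⟨K, hKU, hK, hμK⟩ := (hU.measurableSet.inter hgc.measurableSet).exists_isCompact_sdiff_lt
    (μ := μ) (measure_inter_ne_top_of_right_ne_top hgc.measure_lt_top.ne)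
    (ENNReal.ofReal_pos.2 hδ).ne'
  refine ⟨K, hKU.trans inter_subset_left, hK, ?_⟩
  have hindicator : Kᶜ.indicator g = (tsupport g \ K).indicator g := by
    rw [sdiff_eq, inter_comm, ← indicator_indicator, indicator_eq_self.2 (subset_tsupport g)]
  rw [hindicator]
  refine hsmall _ (hgc.measurableSet.diff hK.measurableSet) ?_
  rw [Measure.restrict_apply (hgc.measurableSet.diff hK.measurableSet), inter_comm,
    ← inter_sdiff_assoc]
  exact hμK.le

theorem exists_contDiff_tsupport_subset_eLpNorm_sub_le [NormedSpace ℝ F] (hp₁ : 1 ≤ p)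
    (hp : p ≠ ⊤) {U : Set E} (hU : IsOpen U) {f : E → F} (hf : MemLp f p (μ.restrict U))
    {ε : ℝ} (hε : 0 < ε) :
    ∃ h : E → F, HasCompactSupport h ∧ ContDiff ℝ ∞ h ∧ tsupport h ⊆ U ∧
      eLpNorm (f - h) p (μ.restrict U) ≤ ENNReal.ofReal ε := by
  obtain ⟨g, hgc, hg, hfg⟩ := hf.exist_eLpNorm_sub_le hp hp₁ (half_pos hε)
  have hgLp : MemLp g p (μ.restrict U) := hg.continuous.memLp_of_hasCompactSupport hgc
  obtain ⟨K, hKU, hK, hgK⟩ := exists_isCompact_eLpNorm_indicator_compl_le hp₁ hp hU hgLp hgc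
    (half_pos hε)
  obtain ⟨χ, hχ, hχU, hχK, hχ01⟩ := exists_contDiff_tsupport_subset_eqOn_one hK hU hKU
  refine ⟨fun x => χ x • g x, hgc.smul_left, hχ.smul hg,
    (tsupport_smul_subset_left χ g).trans hχU, ?_⟩
  have hcut (x : E) : ‖g x - χ x • g x‖ ≤ ‖Kᶜ.indicator g x‖ := by
    by_cases hx : x ∈ K
    · simp [hχK hx]
    · have hsub : g x - χ x • g x = (1 - χ x) • g x := by rw [sub_smul, one_smul]
      rw [indicator_of_mem hx, hsub, norm_smul,
        Real.norm_of_nonneg (sub_nonneg.2 (hχ01 x).2)]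
      exact mul_le_of_le_one_left (norm_nonneg _) (sub_le_self 1 (hχ01 x).1)
  have hcutLp : AEStronglyMeasurable (g - fun x => χ x • g x) (μ.restrict U) :=
    (hg.continuous.sub (hχ.smul hg).continuous).aestronglyMeasurable
  calc eLpNorm (f - fun x => χ x • g x) p (μ.restrict U)
      = eLpNorm ((f - g) + (g - fun x => χ x • g x)) p (μ.restrict U) := by
        rw [sub_add_sub_cancel]
    _ ≤ eLpNorm (f - g) p (μ.restrict U) + eLpNorm (g - fun x => χ x • g x) p (μ.restrict U) :=
        eLpNorm_add_le (hf.sub hgLp).aestronglyMeasurable hcutLp hp₁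
    _ ≤ ENNReal.ofReal (ε / 2) + ENNReal.ofReal (ε / 2) :=
        add_le_add hfg ((eLpNorm_mono hcut).trans hgK)
    _ = ENNReal.ofReal ε := by
        rw [← ENNReal.ofReal_add (half_pos hε).le (half_pos hε).le, add_halves]

end SmoothDensity

theorem exists_contDiff_tsupport_subset_setIntegral_abs_sub_lt {a b : ℝ} {f : ℝ → ℝ}
    (hf : IntegrableOn f (Icc a b)) {ε : ℝ} (hε : 0 < ε) :
    ∃ h : ℝ → ℝ, HasCompactSupport h ∧ ContDiff ℝ ∞ h ∧ tsupport h ⊆ Ioo a b ∧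
      ∫ x in Icc a b, |f x - h x| < ε := by
  have hf' : IntegrableOn f (Ioo a b) := hf.mono_set Ioo_subset_Icc_self
  obtain ⟨h, hc, hh, hsupp, hfh⟩ := exists_contDiff_tsupport_subset_eLpNorm_sub_le le_rfl
    ENNReal.one_ne_top isOpen_Ioo (memLp_one_iff_integrable.2 hf') (half_pos hε)
  refine ⟨h, hc, hh, hsupp, lt_of_le_of_lt ?_ (half_lt_self hε)⟩
  have hint : Integrable (f - h) (volume.restrict (Ioo a b)) :=
    hf'.sub (hh.continuous.integrable_of_hasCompactSupport hc).integrableOn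
  rw [integral_Icc_eq_integral_Ioo, ← ENNReal.ofReal_le_ofReal_iff (half_pos hε).le]
  calc ENNReal.ofReal (∫ x in Ioo a b, |f x - h x|)
      = eLpNorm (f - h) 1 (volume.restrict (Ioo a b)) := by
        rw [eLpNorm_one_eq_lintegral_enorm, ← ofReal_integral_norm_eq_lintegral_enorm hint]
        rfl
    _ ≤ ENNReal.ofReal (ε / 2) := hfh

/-! ### Uniqueness of the Laplace transform -/

-- Both sides extend to an analytic function on a vertical strip around the imaginary axis, on which
-- it is the characteristic function.
theorem ext_of_mgf_eventuallyEq {μ ν : Measure ℝ} [IsFiniteMeasure μ] [IsFiniteMeasure ν]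
    (hμ : 0 ∈ interior (integrableExpSet id μ)) (hν : 0 ∈ interior (integrableExpSet id ν))
    (h : mgf id μ =ᶠ[𝓝 0] mgf id ν) : μ = ν := by
  set strip : Set ℂ :=
    {z | z.re ∈ interior (integrableExpSet id μ) ∩ interior (integrableExpSet id ν)}
  have hstrip : IsPreconnected strip :=
    (((convex_integrableExpSet.interior.inter
      convex_integrableExpSet.interior).linear_preimage Complex.reLm)).isPreconnected
  have himag (t : ℝ) : (t * Complex.I : ℂ) ∈ strip := by simpa [strip] using ⟨hμ, hν⟩
  have hreal : Tendsto (fun x : ℝ => (x : ℂ)) (𝓝[≠] 0) (𝓝[≠] 0) :=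
    Complex.continuous_ofReal.continuousWithinAt.tendsto_nhdsWithin fun x hx => by simpa using hx
  have hfreq : ∃ᶠ z in 𝓝[≠] (0 : ℂ), complexMGF id μ z = complexMGF id ν z := by
    refine hreal.frequently (Eventually.frequently ?_)
    filter_upwards [nhdsWithin_le_nhds h] with t ht
    rw [complexMGF_ofReal, complexMGF_ofReal, ht]
  have heq : EqOn (complexMGF id μ) (complexMGF id ν) strip :=
    (analyticOnNhd_complexMGF.mono fun _ hz => hz.1).eqOn_of_preconnected_of_frequently_eq
      (analyticOnNhd_complexMGF.mono fun _ hz => hz.2) hstrip (by simpa using himag 0) hfreq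
  refine Measure.ext_of_charFun (funext fun t => ?_)
  rw [← complexMGF_id_mul_I, ← complexMGF_id_mul_I, heq (himag t)]

/-- The Laplace transform `∫ e^{-ξ x} μ(dx)` of a measure on `ℝ`, as an extended nonnegative
number, so that no integrability is needed to state its properties. -/
def laplaceTransform (μ : Measure ℝ) (ξ : ℝ) : ENNReal :=
  ∫⁻ x, ENNReal.ofReal (Real.exp (-ξ * x)) ∂μ

/-- The measure `e^{-x} μ(dx)`, which is finite as soon as the Laplace transform of `μ` is finite
at `1`. -/
def expDamped (μ : Measure ℝ) : Measure ℝ :=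
  μ.withDensity fun x => ENNReal.ofReal (Real.exp (-x))

theorem expDamped_injective : Function.Injective expDamped := by
  refine Function.LeftInverse.injective
    (g := fun μ => μ.withDensity fun x => (ENNReal.ofReal (Real.exp (-x)))⁻¹) fun μ => ?_
  exact withDensity_inv_same (by fun_prop)
    (.of_forall fun x => (ENNReal.ofReal_pos.2 (Real.exp_pos _)).ne')
    (.of_forall fun x => ENNReal.ofReal_ne_top)

theorem lintegral_exp_mul_expDamped (μ : Measure ℝ) (t : ℝ) :
    ∫⁻ x, ENNReal.ofReal (Real.exp (t * x)) ∂expDamped μ = laplaceTransform μ (1 - t) := by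
  rw [expDamped, lintegral_withDensity_eq_lintegral_mul _ (by fun_prop) (by fun_prop)]
  refine lintegral_congr fun x => ?_
  rw [Pi.mul_apply, ← ENNReal.ofReal_mul (Real.exp_pos _).le, ← Real.exp_add]
  ring_nf

theorem isFiniteMeasure_expDamped {μ : Measure ℝ} (hμ : laplaceTransform μ 1 ≠ ⊤) :
    IsFiniteMeasure (expDamped μ) :=
  isFiniteMeasure_withDensity (by simpa only [laplaceTransform, neg_one_mul] using hμ)

theorem mgf_expDamped (μ : Measure ℝ) (t : ℝ) :
    mgf id (expDamped μ) t = (laplaceTransform μ (1 - t)).toReal := by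
  rw [← lintegral_exp_mul_expDamped]
  exact integral_eq_lintegral_of_nonneg_ae (.of_forall fun _ => (Real.exp_pos _).le)
    (by fun_prop)

theorem zero_mem_interior_integrableExpSet_expDamped {μ : Measure ℝ}
    (hμ : ∀ ξ, 0 < ξ → laplaceTransform μ ξ ≠ ⊤) :
    0 ∈ interior (integrableExpSet id (expDamped μ)) := by
  refine mem_interior.2 ⟨Iio 1, fun t ht => ⟨by fun_prop, ?_⟩, isOpen_Iio, mem_Iio.2 one_pos⟩
  rw [hasFiniteIntegral_iff_ofReal (.of_forall fun _ => (Real.exp_pos _).le)]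
  simp only [id, lintegral_exp_mul_expDamped]
  exact (hμ _ (sub_pos.2 ht)).lt_top

theorem ext_of_laplaceTransform {μ ν : Measure ℝ} (hμ : ∀ ξ, 0 < ξ → laplaceTransform μ ξ ≠ ⊤)
    (h : ∀ ξ, 0 < ξ → laplaceTransform μ ξ = laplaceTransform ν ξ) : μ = ν := by
  have hν (ξ : ℝ) (hξ : 0 < ξ) : laplaceTransform ν ξ ≠ ⊤ := h ξ hξ ▸ hμ ξ hξ
  have := isFiniteMeasure_expDamped (hμ 1 one_pos)
  have := isFiniteMeasure_expDamped (hν 1 one_pos)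
  refine expDamped_injective (ext_of_mgf_eventuallyEq
    (zero_mem_interior_integrableExpSet_expDamped hμ)
    (zero_mem_interior_integrableExpSet_expDamped hν) ?_)
  filter_upwards [Iio_mem_nhds one_pos] with t ht
  rw [mgf_expDamped, mgf_expDamped, h _ (sub_pos.2 ht)]

theorem laplaceTransform_conv (μ ν : Measure ℝ) [SFinite ν] (ξ : ℝ) :
    laplaceTransform (μ ∗ ν) ξ = laplaceTransform μ ξ * laplaceTransform ν ξ := by
  have hexp (x y : ℝ) : ENNReal.ofReal (Real.exp (-ξ * (x + y))) =
      ENNReal.ofReal (Real.exp (-ξ * x)) * ENNReal.ofReal (Real.exp (-ξ * y)) := by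
    rw [← ENNReal.ofReal_mul (Real.exp_pos _).le, ← Real.exp_add, mul_add]
  simp only [laplaceTransform]
  rw [Measure.lintegral_conv (by fun_prop)]
  simp_rw [hexp]
  exact lintegral_lintegral_mul (by fun_prop) (by fun_prop)

theorem laplaceTransform_ne_zero {μ : Measure ℝ} (hμ : μ ≠ 0) (ξ : ℝ) :
    laplaceTransform μ ξ ≠ 0 := by
  intro h
  rw [laplaceTransform, lintegral_eq_zero_iff (by fun_prop)] at h
  refine hμ (ae_eq_bot.1 (eventually_false_iff_eq_bot.1 (h.mono fun x hx => ?_)))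
  exact (ENNReal.ofReal_pos.2 (Real.exp_pos _)).ne' hx

theorem laplaceTransform_restrict_Ioi_volume {ξ : ℝ} (hξ : 0 < ξ) :
    laplaceTransform (volume.restrict (Ioi 0)) ξ = ENNReal.ofReal (1 / ξ) := by
  rw [laplaceTransform, ← ofReal_integral_eq_lintegral_ofReal
    (integrableOn_exp_mul_Ioi (neg_lt_zero.2 hξ) 0) (.of_forall fun _ => (Real.exp_pos _).le),
    integral_exp_mul_Ioi (neg_lt_zero.2 hξ), mul_zero, Real.exp_zero, neg_div_neg_eq]

/-! ### Convolution of measures on the half-line -/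

theorem isLocallyFiniteMeasure_of_Iic_ne_top {α : Type*} [TopologicalSpace α] [LinearOrder α]
    [OrderTopology α] [NoMaxOrder α] [MeasurableSpace α] {μ : Measure α}
    (hμ : ∀ c, μ (Iic c) ≠ ⊤) : IsLocallyFiniteMeasure μ where
  finiteAtNhds x :=
    let ⟨c, hc⟩ := exists_gt x
    ⟨Iic c, Iic_mem_nhds hc, (hμ c).lt_top⟩

section ConvolutionOnHalfLine

variable {M N : Measure ℝ}

theorem conv_Iic_le [SFinite N] (hM : ∀ᵐ r ∂M, 0 ≤ r) (hN : ∀ᵐ q ∂N, 0 ≤ q) (c : ℝ) :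
    (M ∗ N) (Iic c) ≤ M (Iic c) * N (Iic c) := by
  rw [Measure.conv, Measure.map_apply (by fun_prop) measurableSet_Iic, ← Measure.prod_prod]
  refine measure_mono_ae ?_
  filter_upwards [Measure.quasiMeasurePreserving_fst.ae hM,
    Measure.quasiMeasurePreserving_snd.ae hN] with p hp₁ hp₂ hp
  have hp : p.1 + p.2 ≤ c := hp
  exact ⟨by rw [mem_Iic]; linarith, by rw [mem_Iic]; linarith⟩

theorem mul_Iic_le_conv_Iic_add [SFinite N] (a b : ℝ) :
    M (Iic a) * N (Iic b) ≤ (M ∗ N) (Iic (a + b)) := by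
  rw [Measure.conv, Measure.map_apply (by fun_prop) measurableSet_Iic, ← Measure.prod_prod]
  refine measure_mono fun p hp => ?_
  exact (add_le_add hp.1 hp.2 : p.1 + p.2 ≤ a + b)

theorem restrict_Ici_volume_conv [SFinite M] :
    volume.restrict (Ici 0) ∗ M = volume.withDensity fun u => M (Iic u) := by
  ext s hs
  have hmeas : Measurable (s.indicator (1 : ℝ → ENNReal)) := measurable_one.indicator hs
  have hjoint : Measurable fun p : ℝ × ℝ =>
      (Ici p.1).indicator (1 : ℝ → ENNReal) p.2 * s.indicator 1 p.2 := by
    refine Measurable.mul (f := {p : ℝ × ℝ | p.1 ≤ p.2}.indicator 1) ?_ (by fun_prop)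
    exact measurable_one.indicator (measurableSet_le measurable_fst measurable_snd)
  have htranslate (r : ℝ) : ∫⁻ t in Ici 0, s.indicator (1 : ℝ → ENNReal) (r + t) =
      ∫⁻ u, (Ici r).indicator 1 u * s.indicator 1 u := by
    rw [← lintegral_indicator measurableSet_Ici,
      ← lintegral_add_left_eq_self (fun u => (Ici r).indicator 1 u * s.indicator 1 u) r]
    refine lintegral_congr fun t => ?_
    simp only [indicator_apply, mem_Ici, le_add_iff_nonneg_right, Pi.one_apply, ite_mul, one_mul,
      zero_mul]
  have hinner (u : ℝ) :
      ∫⁻ r, (Ici r).indicator (1 : ℝ → ENNReal) u * s.indicator 1 u ∂M =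
        s.indicator (fun u => M (Iic u)) u := by
    have hswap (r : ℝ) :
        (Ici r).indicator (1 : ℝ → ENNReal) u = (Iic u).indicator 1 r := rfl
    simp_rw [hswap]
    rw [lintegral_mul_const _ (measurable_one.indicator measurableSet_Iic),
      lintegral_indicator_one measurableSet_Iic]
    by_cases hu : u ∈ s <;> simp [hu]
  calc (volume.restrict (Ici 0) ∗ M) s
      = ∫⁻ r, (∫⁻ t in Ici 0, s.indicator 1 (r + t)) ∂M := by
        rw [Measure.conv_comm, ← lintegral_indicator_one hs, Measure.lintegral_conv hmeas]
    _ = ∫⁻ r, (∫⁻ u, (Ici r).indicator 1 u * s.indicator 1 u) ∂M :=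
        lintegral_congr htranslate
    _ = ∫⁻ u, s.indicator (fun u => M (Iic u)) u := by
        rw [lintegral_lintegral_swap hjoint.aemeasurable]
        exact lintegral_congr hinner
    _ = volume.withDensity (fun u => M (Iic u)) s := by
        rw [lintegral_indicator hs, withDensity_apply _ hs]

theorem integral_restrict_Ici_volume_conv [SFinite M] (hM : ∀ c, M (Iic c) ≠ ⊤) (f : ℝ → ℝ) :
    ∫ u, f u ∂(volume.restrict (Ici 0) ∗ M) = ∫ u, M.real (Iic u) * f u := by
  have hmono : Monotone fun u => M (Iic u) := fun _ _ h => measure_mono (Iic_subset_Iic.2 h)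
  rw [restrict_Ici_volume_conv, integral_withDensity_eq_integral_toReal_smul hmono.measurable
    (.of_forall fun u => (hM u).lt_top)]
  rfl

/-- The function `u ↦ M (-∞, u + 1]`. For the measure `M` with density `k₋₁(· - 1)` on `(0, ∞)`
it is `k₀⁺`, whose argument starts at `-1`. -/
def shiftedCdf (M : Measure ℝ) (u : ℝ) : ℝ := M.real (Iic (u + 1))

theorem Iop_shiftedCdf [SFinite M] (hM₀ : ∀ᵐ r ∂M, 0 ≤ r) (hM : ∀ c, M (Iic c) ≠ ⊤)
    {g : ℝ → ℝ} (hg : ∀ y ≤ -1, g y = 0) {x : ℝ} (hx : -1 ≤ x) :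
    Iop (shiftedCdf M) g x = ∫ u, g (x - u) ∂(volume.restrict (Ici 0) ∗ M) := by
  have hcdf (u : ℝ) (hu : u < 0) : M.real (Iic u) = 0 := by
    refine measureReal_eq_zero_iff (hM u) |>.2 (measure_mono_null ?_ (ae_iff.1 hM₀))
    exact fun r hr => not_le.2 (lt_of_le_of_lt hr hu)
  have hvanish (u : ℝ) (hu : u ∉ Icc 0 (x + 1)) : M.real (Iic u) * g (x - u) = 0 := by
    rcases lt_or_ge u 0 with hneg | hnonneg
    · rw [hcdf u hneg, zero_mul]
    · have : x + 1 < u := not_le.1 fun h => hu ⟨hnonneg, h⟩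
      rw [hg _ (by linarith), mul_zero]
  calc Iop (shiftedCdf M) g x
      = ∫ y in (-1)..x, M.real (Iic (x - y)) * g (x - (x - y)) := by
        simp only [Iop, shiftedCdf, sub_add_cancel, sub_sub_cancel]
    _ = ∫ u in 0..(x + 1), M.real (Iic u) * g (x - u) := by
        rw [intervalIntegral.integral_comp_sub_left fun u => M.real (Iic u) * g (x - u),
          sub_self, sub_neg_eq_add]
    _ = ∫ u, M.real (Iic u) * g (x - u) := by
        rw [intervalIntegral.integral_of_le (by linarith), ← integral_Icc_eq_integral_Ioc,
          setIntegral_eq_integral_of_forall_compl_eq_zero hvanish]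
    _ = ∫ u, g (x - u) ∂(volume.restrict (Ici 0) ∗ M) :=
        (integral_restrict_Ici_volume_conv hM _).symm

end ConvolutionOnHalfLine

section HalfLineDerivatives

variable {F : Type*} [NormedAddCommGroup F]

theorem integrable_comp_sub_conv_restrict {f : ℝ → F} (hf : Continuous f)
    (hc : HasCompactSupport f) (x : ℝ) :
    Integrable (fun z => f (x - z)) (volume.restrict (Ici 0) ∗ volume.restrict (Ioi (0 : ℝ))) := by
  have hfin (c : ℝ) : (volume.restrict (Ici 0) ∗ volume.restrict (Ioi (0 : ℝ))) (Iic c) ≠ ⊤ := by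
    refine ne_top_of_le_ne_top ?_ (conv_Iic_le
      ((ae_restrict_mem measurableSet_Ici).mono fun _ => id)
      ((ae_restrict_mem measurableSet_Ioi).mono fun _ => le_of_lt) c)
    rw [Measure.restrict_apply measurableSet_Iic, Measure.restrict_apply measurableSet_Iic,
      inter_comm, Ici_inter_Iic, inter_comm, Ioi_inter_Iic]
    exact ENNReal.mul_ne_top measure_Icc_lt_top.ne measure_Ioc_lt_top.ne
  have := isLocallyFiniteMeasure_of_Iic_ne_top hfin
  exact Continuous.integrable_of_hasCompactSupport (by fun_prop)
    (hc.comp_homeomorph (Homeomorph.subLeft x))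

variable [NormedSpace ℝ F]

theorem continuous_integral_comp_sub {N : Measure ℝ} [IsLocallyFiniteMeasure N] {h : ℝ → F}
    (hh : Continuous h) (hc : HasCompactSupport h) : Continuous fun y => ∫ q, h (y - q) ∂N := by
  have := hc.continuous_convolution_right (μ := N) (ContinuousLinearMap.lsmul ℝ ℝ)
    (locallyIntegrable_const (1 : ℝ)) hh
  refine this.congr fun y => ?_
  simp only [convolution_def, ContinuousLinearMap.lsmul_apply, one_smul]

theorem contDiff_one_deriv {h : ℝ → F} (hh : ContDiff ℝ 2 h) : ContDiff ℝ 1 (deriv h) := by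
  rw [← one_add_one_eq_two] at hh
  exact hh.deriv'

theorem continuous_deriv_deriv {h : ℝ → F} (hh : ContDiff ℝ 2 h) : Continuous (deriv (deriv h)) :=
  (contDiff_one_deriv hh).continuous_deriv_one

variable [CompleteSpace F]

theorem integral_Ioi_deriv_comp_sub {h : ℝ → F} (hh : ContDiff ℝ 1 h) (hc : HasCompactSupport h)
    (x : ℝ) : ∫ t in Ioi 0, deriv h (x - t) = h x := by
  have htranslate : HasCompactSupport fun y => h (x + y) :=
    hc.comp_homeomorph (Homeomorph.addLeft x)
  have hsmooth : ContDiff ℝ 1 fun y => h (x + y) := by fun_prop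
  calc ∫ t in Ioi 0, deriv h (x - t)
      = ∫ y in Iic 0, deriv (fun y => h (x + y)) y := by
        simp only [deriv_comp_const_add, sub_eq_add_neg,
          integral_comp_neg_Ioi (0 : ℝ) fun y => deriv h (x + y), neg_zero]
    _ = h x := by rw [htranslate.integral_Iic_deriv_eq hsmooth, add_zero]

theorem integral_deriv_deriv_comp_sub_conv {h : ℝ → F} (hh : ContDiff ℝ 2 h)
    (hc : HasCompactSupport h) (x : ℝ) :
    ∫ z, deriv (deriv h) (x - z) ∂(volume.restrict (Ici 0) ∗ volume.restrict (Ioi 0)) = h x := by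
  have hderiv (y : ℝ) : ∫ t in Ioi 0, deriv (deriv h) (y - t) = deriv h y :=
    integral_Ioi_deriv_comp_sub (contDiff_one_deriv hh) hc.deriv y
  calc ∫ z, deriv (deriv h) (x - z) ∂(volume.restrict (Ici 0) ∗ volume.restrict (Ioi 0))
      = ∫ s in Ici 0, ∫ t in Ioi 0, deriv (deriv h) (x - s - t) := by
        rw [integral_conv
          (integrable_comp_sub_conv_restrict (continuous_deriv_deriv hh) hc.deriv.deriv x)]
        simp only [sub_sub]
    _ = ∫ s in Ioi 0, deriv h (x - s) := by simp only [hderiv, integral_Ici_eq_integral_Ioi]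
    _ = h x := integral_Ioi_deriv_comp_sub (hh.of_le one_le_two) hc x

end HalfLineDerivatives

/-! ### Sonine pairs -/

/-- Two measures on `[0, ∞)` whose convolution is Lebesgue measure on `(0, ∞)`: Sonine's condition
on a pair of kernels, stated for measures so that no density is required. -/
structure IsSoninePair (M N : Measure ℝ) : Prop where
  left_nonneg : ∀ᵐ r ∂M, 0 ≤ r
  right_nonneg : ∀ᵐ q ∂N, 0 ≤ q
  conv_eq : M ∗ N = volume.restrict (Ioi 0)

namespace IsSoninePair

variable {M N : Measure ℝ}

theorem symm [SFinite M] [SFinite N] (hMN : IsSoninePair M N) : IsSoninePair N M where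
  left_nonneg := hMN.right_nonneg
  right_nonneg := hMN.left_nonneg
  conv_eq := by rw [Measure.conv_comm, hMN.conv_eq]

theorem conv_Iic (hMN : IsSoninePair M N) (c : ℝ) : (M ∗ N) (Iic c) = ENNReal.ofReal c := by
  rw [hMN.conv_eq, Measure.restrict_apply measurableSet_Iic, inter_comm, Ioi_inter_Iic,
    Real.volume_Ioc, sub_zero]

theorem left_Iic_ne_top [SFinite N] (hMN : IsSoninePair M N) (c : ℝ) : M (Iic c) ≠ ⊤ := by
  set b := max c 1
  have hb : 0 < b := lt_max_of_lt_right one_pos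
  have hN : N (Iic b) ≠ 0 := by
    have hle := conv_Iic_le hMN.left_nonneg hMN.right_nonneg b
    rw [hMN.conv_Iic] at hle
    exact right_ne_zero_of_mul ((ENNReal.ofReal_pos.2 hb).trans_le hle).ne'
  have hprod : M (Iic b) * N (Iic b) ≠ ⊤ := by
    refine ne_top_of_le_ne_top ?_ (mul_Iic_le_conv_Iic_add b b)
    rw [hMN.conv_Iic]
    exact ENNReal.ofReal_ne_top
  exact ne_top_of_le_ne_top (ENNReal.lt_top_of_mul_ne_top_left hprod hN).ne
    (measure_mono (Iic_subset_Iic.2 (le_max_left c 1)))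

end IsSoninePair

theorem IsSoninePair.Iop_integral_deriv_deriv {M N : Measure ℝ} [SFinite M] [SFinite N]
    (hMN : IsSoninePair M N) {h : ℝ → ℝ} (hh : ContDiff ℝ 2 h) (hc : HasCompactSupport h)
    (hsupp : tsupport h ⊆ Ioi (-1)) {x : ℝ} (hx : -1 ≤ x) :
    Iop (shiftedCdf M) (fun y => ∫ q, deriv (deriv h) (y - q) ∂N) x = h x := by
  have hvanish (y : ℝ) (hy : y ≤ -1) : ∫ q, deriv (deriv h) (y - q) ∂N = 0 := by
    refine integral_eq_zero_of_ae (hMN.right_nonneg.mono fun q hq => ?_)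
    have hnot : y - q ∉ tsupport h := fun hmem => not_lt.2 hy (by linarith [mem_Ioi.1 (hsupp hmem)])
    exact deriv_of_notMem_tsupport fun hmem => hnot (tsupport_deriv_subset hmem)
  have hconv : (volume.restrict (Ici 0) ∗ M) ∗ N =
      volume.restrict (Ici 0) ∗ volume.restrict (Ioi 0) := by
    rw [Measure.conv_assoc, hMN.conv_eq]
  have hint := integrable_comp_sub_conv_restrict (continuous_deriv_deriv hh) hc.deriv.deriv x
  rw [← hconv] at hint
  calc Iop (shiftedCdf M) (fun y => ∫ q, deriv (deriv h) (y - q) ∂N) x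
      = ∫ u, (∫ q, deriv (deriv h) (x - u - q) ∂N) ∂(volume.restrict (Ici 0) ∗ M) :=
        Iop_shiftedCdf hMN.left_nonneg hMN.left_Iic_ne_top hvanish hx
    _ = ∫ z, deriv (deriv h) (x - z) ∂((volume.restrict (Ici 0) ∗ M) ∗ N) := by
        rw [integral_conv hint]
        simp only [sub_sub]
    _ = h x := by rw [hconv, integral_deriv_deriv_comp_sub_conv hh hc]

/-! ### The Sonine pair of a scale kernel -/

/-- The measure on `(0, ∞)` with density `f`, by which a kernel such as `Φ` or `k₋₁(· - 1)` is
regarded as one half of a Sonine pair. Negative values of `f` are replaced by `0`. -/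
def densityOnPos (f : ℝ → ℝ) : Measure ℝ :=
  (volume.restrict (Ioi 0)).withDensity fun x => ENNReal.ofReal (f x)

instance (f : ℝ → ℝ) : SFinite (densityOnPos f) :=
  inferInstanceAs (SFinite (Measure.withDensity _ _))

theorem ae_nonneg_densityOnPos (f : ℝ → ℝ) : ∀ᵐ x ∂densityOnPos f, 0 ≤ x :=
  (withDensity_absolutelyContinuous _ _).ae_le
    ((ae_restrict_mem measurableSet_Ioi).mono fun _ hx => le_of_lt hx)

theorem densityOnPos_real_Iic {f : ℝ → ℝ} (hf : AEMeasurable f (volume.restrict (Ioi 0)))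
    (hf₀ : ∀ x, 0 < x → 0 ≤ f x) (c : ℝ) :
    (densityOnPos f).real (Iic c) = ∫ x in Ioc 0 c, f x := by
  have hnonneg : ∀ᵐ x ∂volume.restrict (Ioc 0 c), 0 ≤ f x :=
    (ae_restrict_mem measurableSet_Ioc).mono fun x hx => hf₀ x hx.1
  rw [integral_eq_lintegral_of_nonneg_ae hnonneg
    (hf.mono_measure (Measure.restrict_mono_set _ Ioc_subset_Ioi_self)).aestronglyMeasurable,
    measureReal_def, densityOnPos, withDensity_apply _ measurableSet_Iic,
    Measure.restrict_restrict measurableSet_Iic, inter_comm, Ioi_inter_Iic]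

theorem aemeasurable_of_integrableOn_exp_mul {f : ℝ → ℝ} {ξ : ℝ} {s : Set ℝ}
    (hf : IntegrableOn (fun x => Real.exp (-ξ * x) * f x) s) :
    AEMeasurable f (volume.restrict s) := by
  have hmul : AEMeasurable (fun x => Real.exp (ξ * x) * (Real.exp (-ξ * x) * f x))
      (volume.restrict s) :=
    AEMeasurable.mul (by fun_prop) hf.aemeasurable
  refine hmul.congr (.of_forall fun x => ?_)
  simp only [← mul_assoc, ← Real.exp_add, neg_mul, add_neg_cancel, Real.exp_zero, one_mul]

theorem laplaceTransform_densityOnPos {f : ℝ → ℝ} {ξ : ℝ}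
    (hf : IntegrableOn (fun x => Real.exp (-ξ * x) * f x) (Ioi 0))
    (hf₀ : ∀ x, 0 < x → 0 ≤ f x) :
    laplaceTransform (densityOnPos f) ξ =
      ENNReal.ofReal (∫ x in Ioi 0, Real.exp (-ξ * x) * f x) := by
  have hnonneg : ∀ᵐ x ∂volume.restrict (Ioi 0), 0 ≤ Real.exp (-ξ * x) * f x :=
    (ae_restrict_mem measurableSet_Ioi).mono fun x hx => mul_nonneg (Real.exp_pos _).le (hf₀ x hx)
  rw [laplaceTransform, densityOnPos, lintegral_withDensity_eq_lintegral_mul₀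
    (aemeasurable_of_integrableOn_exp_mul hf).ennreal_ofReal (by fun_prop),
    ofReal_integral_eq_lintegral_ofReal hf hnonneg]
  refine lintegral_congr fun x => ?_
  rw [Pi.mul_apply, ENNReal.ofReal_mul (Real.exp_pos _).le, mul_comm]

theorem exp_mul_ofReal_eq (f : ℝ → ℝ) (ξ x : ℝ) :
    Complex.exp (-(ξ : ℂ) * (x : ℂ)) * (f x : ℂ) = ((Real.exp (-ξ * x) * f x : ℝ) : ℂ) := by
  push_cast
  rfl

theorem setIntegral_exp_mul_ofReal (f : ℝ → ℝ) (ξ : ℝ) (s : Set ℝ) :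
    ∫ x in s, Complex.exp (-(ξ : ℂ) * (x : ℂ)) * (f x : ℂ) =
      ((∫ x in s, Real.exp (-ξ * x) * f x : ℝ) : ℂ) := by
  simp_rw [exp_mul_ofReal_eq]
  exact integral_ofReal

theorem PhiFn_nonneg (φ : Measure ℝ) (x : ℝ) : 0 ≤ PhiFn φ x := by
  unfold PhiFn
  split_ifs
  · exact integral_nonneg fun y => ENNReal.toReal_nonneg
  · exact le_rfl

namespace IsScaleKernel

variable {φ : Measure ℝ} {k : ℝ → ℝ}

theorem comp_sub_one_nonneg (hk : IsScaleKernel φ k) (x : ℝ) (hx : 0 < x) : 0 ≤ k (x - 1) :=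
  hk.2.1 _ (by linarith)

theorem integrableOn_exp_mul (hk : IsScaleKernel φ k) {ξ : ℝ} (hξ : 0 < ξ) :
    IntegrableOn (fun x => Real.exp (-ξ * x) * k (x - 1)) (Ioi 0) := by
  have h := (hk.2.2.2.2.2 ξ (by simpa using hξ)).1
  simp_rw [exp_mul_ofReal_eq fun x => k (x - 1)] at h
  exact h.re

theorem integral_exp_mul (hk : IsScaleKernel φ k) {ξ : ℝ} (hξ : 0 < ξ) :
    ∫ x in Ioi 0, Real.exp (-ξ * x) * k (x - 1) =
      ξ / (ξ ^ 2 * ∫ x in Ioi 0, Real.exp (-ξ * x) * PhiFn φ x) := by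
  have h := (hk.2.2.2.2.2 ξ (by simpa using hξ)).2
  rw [psiFn, setIntegral_exp_mul_ofReal (PhiFn φ), setIntegral_exp_mul_ofReal fun x => k (x - 1)]
    at h
  exact_mod_cast h

theorem kIter_one_eq (hk : IsScaleKernel φ k) :
    kIter k 1 = shiftedCdf (densityOnPos fun x => k (x - 1)) := by
  funext u
  have hmeas : AEMeasurable (fun x => k (x - 1)) (volume.restrict (Ioi 0)) :=
    aemeasurable_of_integrableOn_exp_mul (hk.integrableOn_exp_mul one_pos)
  calc ∫ y in Iic u, k y
      = ∫ y in Icc (-1) u, k y :=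
        setIntegral_eq_of_subset_of_forall_sdiff_eq_zero measurableSet_Iic Icc_subset_Iic_self
          fun y hy => hk.1 y (not_le.1 fun h => hy.2 ⟨h, hy.1⟩)
    _ = ∫ y in Ioc (-1) u, k y := integral_Icc_eq_integral_Ioc
    _ = ∫ x in Ioc 0 (u + 1), k (x - 1) := by
        rw [← (measurePreserving_sub_right volume (1 : ℝ)).setIntegral_preimage_emb
          (measurableEmbedding_subRight 1), preimage_sub_const_Ioc, neg_add_cancel]
    _ = shiftedCdf (densityOnPos fun x => k (x - 1)) u :=
        (densityOnPos_real_Iic hmeas hk.comp_sub_one_nonneg _).symm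

theorem densityOnPos_ne_zero (hk : IsScaleKernel φ k) (hk0 : 0 < kIter k 1 1) :
    densityOnPos (fun x => k (x - 1)) ≠ 0 := by
  intro h
  rw [hk.kIter_one_eq, shiftedCdf, h, measureReal_zero_apply] at hk0
  exact hk0.false

theorem laplaceTransform_mul_laplaceTransform (hk : IsScaleKernel φ k) (hk0 : 0 < kIter k 1 1)
    {ξ : ℝ} (hξ : 0 < ξ) :
    laplaceTransform (densityOnPos fun x => k (x - 1)) ξ *
      laplaceTransform (densityOnPos (PhiFn φ)) ξ = ENNReal.ofReal (1 / ξ) := by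
  have hkint := hk.integrableOn_exp_mul hξ
  have hkΦ := hk.integral_exp_mul hξ
  have hLk := laplaceTransform_densityOnPos hkint hk.comp_sub_one_nonneg
  set A := ∫ x in Ioi 0, Real.exp (-ξ * x) * k (x - 1)
  set B := ∫ x in Ioi 0, Real.exp (-ξ * x) * PhiFn φ x
  have hA : 0 < A := by
    have := laplaceTransform_ne_zero (hk.densityOnPos_ne_zero hk0) ξ
    rwa [hLk, ne_eq, ENNReal.ofReal_eq_zero, not_le] at this
  have hB : B ≠ 0 := by
    intro h
    rw [hkΦ, h, mul_zero, div_zero] at hA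
    exact hA.false
  have hΦint : IntegrableOn (fun x => Real.exp (-ξ * x) * PhiFn φ x) (Ioi 0) :=
    not_imp_comm.1 integral_undef hB
  have hLΦ := laplaceTransform_densityOnPos hΦint fun x _ => PhiFn_nonneg φ x
  have hAB : A * B = 1 / ξ := by
    rw [hkΦ]
    field_simp
  rw [hLk, hLΦ, ← ENNReal.ofReal_mul hA.le, hAB]

theorem isSoninePair (hk : IsScaleKernel φ k) (hk0 : 0 < kIter k 1 1) :
    IsSoninePair (densityOnPos fun x => k (x - 1)) (densityOnPos (PhiFn φ)) where
  left_nonneg := ae_nonneg_densityOnPos _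
  right_nonneg := ae_nonneg_densityOnPos _
  conv_eq := by
    refine (ext_of_laplaceTransform (fun ξ hξ => ?_) fun ξ hξ => ?_).symm
    · rw [laplaceTransform_restrict_Ioi_volume hξ]
      exact ENNReal.ofReal_ne_top
    · rw [laplaceTransform_restrict_Ioi_volume hξ, laplaceTransform_conv,
        hk.laplaceTransform_mul_laplaceTransform hk0 hξ]

end IsScaleKernel

theorem domain_DD_dense_general {M N : Measure ℝ} [SFinite M] [SFinite N]
    (hMN : IsSoninePair M N) {b : ℝ} (hb : -1 < b) {f : ℝ → ℝ}
    (hf : IntegrableOn f (Icc (-1) b)) {ε : ℝ} (hε : 0 < ε) :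
    ∃ g : ℝ → ℝ, IntegrableOn g (Icc (-1) b) ∧
      ∫ x in Icc (-1) b, |f x - (Iop (shiftedCdf M) g x -
        Iop (shiftedCdf M) g b / shiftedCdf M b * shiftedCdf M x)| < ε := by
  obtain ⟨h, hc, hh, hsupp, hfh⟩ := exists_contDiff_tsupport_subset_setIntegral_abs_sub_lt hf hε
  have hh₂ : ContDiff ℝ 2 h := contDiff_infty.1 hh 2
  have := isLocallyFiniteMeasure_of_Iic_ne_top hMN.symm.left_Iic_ne_top
  have hcont : Continuous fun y => ∫ q, deriv (deriv h) (y - q) ∂N :=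
    continuous_integral_comp_sub (continuous_deriv_deriv hh₂) hc.deriv.deriv
  have hIop {x : ℝ} (hx : -1 ≤ x) :
      Iop (shiftedCdf M) (fun y => ∫ q, deriv (deriv h) (y - q) ∂N) x = h x :=
    hMN.Iop_integral_deriv_deriv hh₂ hc (hsupp.trans Ioo_subset_Ioi_self) hx
  have hhb : h b = 0 := image_eq_zero_of_notMem_tsupport fun hmem => (hsupp hmem).2.false
  refine ⟨_, hcont.continuousOn.integrableOn_Icc,
    (setIntegral_congr_fun measurableSet_Icc fun x hx => ?_).trans_lt hfh⟩
  simp only [hIop hx.1, hIop hb.le, hhb, zero_div, zero_mul, sub_zero]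

/-- the Dirichlet–Dirichlet domain
`{ I^ψ_+ g - (I^ψ_+ g(1)/k₀⁺(1)) k₀⁺ : g ∈ L¹[-1,1] }` is dense in `L¹[-1,1]`. -/
theorem domain_DD_dense (φ : Measure ℝ) (hH0 : H0 φ) (k : ℝ → ℝ)
    (hk : IsScaleKernel φ k) (hk0 : 0 < kIter k 1 1) :
    ∀ f : ℝ → ℝ, IntegrableOn f (Icc (-1) 1) → ∀ ε : ℝ, 0 < ε →
      ∃ g : ℝ → ℝ, IntegrableOn g (Icc (-1) 1) ∧
        (∫ x in Icc (-1 : ℝ) 1,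
          |f x - (Iop (kIter k 1) g x -
            Iop (kIter k 1) g 1 / kIter k 1 1 * kIter k 1 x)|) < ε := by
  intro f hf ε hε
  rw [hk.kIter_one_eq]
  exact domain_DD_dense_general (hk.isSoninePair hk0) (by norm_num) hf hε
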